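/- arXiv:2304.06269 — 4 statements merged into one kernel-verified Lean document; each statement's English description precedes it below -/
import Mathlib

section
/- Let H and H' be finite-dimensional complex inner product spaces, let L : ℕ with L ≥ 1 and ε : ℝ with 0 ≤ ε and L * ε ≤ 1/2. Let φ : Fin L → H be unit vectors with ‖⟪φ i, φ j⟫_ℂ‖ ≤ ε for all i ≠ j, let χ : Fin L → H' be an orthonormal family, and let U : H →ₗᵢ H' be a linear isometry satisfying ‖U (φ i) − χ i‖ ≤ 2 * L * ε for every i. Let a : Fin L → ℂ be coefficients such that ‖∑ i, a i • φ i‖ = 1. Then (∑ i, ‖a i‖^2)^(-1/2) * ‖⟪∑ i, a i • χ i, U (∑ i, a i • φ i)⟫_ℂ‖ ≥ 1 − 3 * (L : ℝ)^(3/2) * ε. (This is the core estimate in the paper's proof that a decoder which corrects each single error from a short list up to error 2Lε also corrects sparse superpositions of those errors, with overall fidelity at least 1 − 3·L^{3/2}·ε against the superposed auxiliary state.) -/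
open scoped InnerProductSpace

/-- Core estimate for decoding sparse superpositions of errors: if a linear isometry `U`
corrects each of `L` approximately pairwise-orthogonal corrupted code-states `φ i` to
orthonormal targets `χ i` up to error `2·L·ε`, then it corrects any normalized superposition
`∑ aᵢ φᵢ` with fidelity at least `1 − 3·L^(3/2)·ε` against the superposed target. -/
theorem sparse_superposition_recovery
    {H H' : Type*} [NormedAddCommGroup H] [InnerProductSpace ℂ H] [FiniteDimensional ℂ H]
    [NormedAddCommGroup H'] [InnerProductSpace ℂ H'] [FiniteDimensional ℂ H']
    (L : ℕ) (hL : 1 ≤ L) (ε : ℝ) (hε : 0 ≤ ε) (hLε : (L : ℝ) * ε ≤ 1 / 2)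
    (φ : Fin L → H) (hφ : ∀ i, ‖φ i‖ = 1)
    (hortho : ∀ i j, i ≠ j → ‖⟪φ i, φ j⟫_ℂ‖ ≤ ε)
    (χ : Fin L → H') (hχ : ∀ i j, ⟪χ i, χ j⟫_ℂ = (if i = j then 1 else 0))
    (U : H →ₗᵢ[ℂ] H')
    (hU : ∀ i, ‖U (φ i) - χ i‖ ≤ 2 * L * ε)
    (a : Fin L → ℂ) (ha : ‖∑ i, a i • φ i‖ = 1) :
    (∑ i, ‖a i‖ ^ 2 : ℝ) ^ (-(1 : ℝ) / 2) *
        ‖⟪∑ i, a i • χ i, U (∑ i, a i • φ i)⟫_ℂ‖ ≥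
      1 - 3 * (L : ℝ) ^ ((3 : ℝ) / 2) * ε := by
  have hLpos : (1 : ℝ) ≤ L := by exact_mod_cast hL
  set s : ℝ := ∑ i, ‖a i‖ ^ 2 with hs
  have hs0 : 0 ≤ s := Finset.sum_nonneg fun i _ => by positivity
  have hA0 : 0 ≤ ∑ i, ‖a i‖ := Finset.sum_nonneg fun i _ => by positivity
  have hCS : (∑ i, ‖a i‖) ^ 2 ≤ L * s := by
    have := sq_sum_le_card_mul_sum_sq (s := (Finset.univ : Finset (Fin L))) (f := fun i => ‖a i‖)
    simpa using this
  -- Gram estimate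
  have hG : 1 ≤ s + ε * (∑ i, ‖a i‖) ^ 2 := by
    have h1 : (1 : ℝ) = ‖⟪∑ i, a i • φ i, ∑ i, a i • φ i⟫_ℂ‖ := by
      rw [inner_self_eq_norm_sq_to_K, ha]; simp
    rw [h1, sum_inner]
    have h2 : s + ε * (∑ i, ‖a i‖) ^ 2
        = ∑ i, ∑ j, ‖a i‖ * ‖a j‖ * ((if i = j then 1 else 0) + ε) := by
      simp only [mul_add, Finset.sum_add_distrib, mul_ite, mul_one, mul_zero,
        Finset.sum_ite_eq, Finset.mem_univ, if_true]
      congr 1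
      · simp [hs, sq]
      · rw [sq, Finset.sum_mul_sum, Finset.mul_sum]
        refine Finset.sum_congr rfl fun i _ => ?_
        rw [Finset.mul_sum]
        exact Finset.sum_congr rfl fun j _ => by ring
    rw [h2]
    refine (norm_sum_le _ _).trans (Finset.sum_le_sum fun i _ => ?_)
    rw [inner_sum]
    refine (norm_sum_le _ _).trans (Finset.sum_le_sum fun j _ => ?_)
    rw [inner_smul_left, inner_smul_right, norm_mul, norm_mul, RCLike.norm_conj, ← mul_assoc]
    refine mul_le_mul_of_nonneg_left ?_ (by positivity)
    by_cases hij : i = j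
    · subst hij
      rw [inner_self_eq_norm_sq_to_K, hφ]
      simpa using hε
    · simpa [hij] using hortho i j hij
  -- norm of the target
  have hv : ⟪∑ i, a i • χ i, ∑ i, a i • χ i⟫_ℂ = (s : ℂ) := by
    simp only [sum_inner, inner_sum, inner_smul_left, inner_smul_right, hχ, mul_ite, mul_one,
      mul_zero, Finset.sum_ite_eq, Finset.mem_univ, if_true]
    rw [hs]
    push_cast
    exact Finset.sum_congr rfl fun i _ => by
      simp [Complex.mul_conj']
  obtain ⟨r, hr0, hrs⟩ : ∃ r : ℝ, 0 ≤ r ∧ s = r ^ 2 := ⟨√s, Real.sqrt_nonneg _, (Real.sq_sqrt hs0).symm⟩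
  obtain ⟨l, hl0, hll⟩ : ∃ l : ℝ, 0 ≤ l ∧ (L : ℝ) = l ^ 2 :=
    ⟨√L, Real.sqrt_nonneg _, (Real.sq_sqrt (by positivity)).symm⟩
  have hvn : ‖∑ i, a i • χ i‖ = r := by
    have h := inner_self_eq_norm_sq_to_K (𝕜 := ℂ) (∑ i, a i • χ i)
    rw [hv] at h
    have h' : s = ‖∑ i, a i • χ i‖ ^ 2 := by
      apply Complex.ofReal_injective
      rw [h]; simp
    rw [hrs] at h'
    exact ((sq_eq_sq₀ hr0 (norm_nonneg _)).1 h').symm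
  have hAr : ∑ i, ‖a i‖ ≤ l * r := by
    refine abs_le_of_sq_le_sq' ?_ (by positivity) |>.2
    rw [mul_pow, ← hll, ← hrs]; exact hCS
  have hd : ‖U (∑ i, a i • φ i) - ∑ i, a i • χ i‖ ≤ 2 * L * ε * (l * r) := by
    have : U (∑ i, a i • φ i) - ∑ i, a i • χ i = ∑ i, a i • (U (φ i) - χ i) := by
      simp [smul_sub, map_sum]
    rw [this]
    calc _ ≤ ∑ i, ‖a i‖ * (2 * L * ε) := by
          refine (norm_sum_le _ _).trans (Finset.sum_le_sum fun i _ => ?_)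
          rw [norm_smul]
          exact mul_le_mul_of_nonneg_left (hU i) (norm_nonneg _)
      _ = 2 * L * ε * ∑ i, ‖a i‖ := by rw [← Finset.sum_mul, mul_comm]
      _ ≤ _ := mul_le_mul_of_nonneg_left hAr (by positivity)
  have hin : r ^ 2 - r * (2 * L * ε * (l * r)) ≤
      ‖⟪∑ i, a i • χ i, U (∑ i, a i • φ i)⟫_ℂ‖ := by
    have h1 : ⟪∑ i, a i • χ i, U (∑ i, a i • φ i)⟫_ℂ
        = (s : ℂ) + ⟪∑ i, a i • χ i, U (∑ i, a i • φ i) - ∑ i, a i • χ i⟫_ℂ := by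
      rw [inner_sub_right, hv]; ring
    have h2 := norm_inner_le_norm (𝕜 := ℂ) (∑ i, a i • χ i)
      (U (∑ i, a i • φ i) - ∑ i, a i • χ i)
    rw [hvn] at h2
    have h3 := h2.trans (mul_le_mul_of_nonneg_left hd hr0)
    rw [h1]
    have h4 := norm_sub_le_norm_add (s : ℂ)
      ⟪∑ i, a i • χ i, U (∑ i, a i • φ i) - ∑ i, a i • χ i⟫_ℂ
    have h5 : ‖(s : ℂ)‖ = r ^ 2 := by
      rw [Complex.norm_real, Real.norm_of_nonneg hs0, hrs]
    rw [h5] at h4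
    linarith
  have hGr : 1 ≤ r ^ 2 * (1 + L * ε) := by
    have := mul_le_mul_of_nonneg_left hCS hε
    rw [hrs] at this hG
    linarith
  have hrpos : 0 < r := by
    rcases hr0.lt_or_eq with h | h
    · exact h
    · rw [← h] at hGr; norm_num at hGr
  have hx0 : 0 ≤ (L : ℝ) * ε := by positivity
  have hr1 : 1 - L * ε ≤ r := by
    by_contra hcon
    push Not at hcon
    have : r ^ 2 ≤ (1 - L * ε) ^ 2 := by gcongr
    nlinarith [mul_le_mul_of_nonneg_right this (by linarith : 0 ≤ 1 + L * ε), sq_nonneg (L * ε)]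
  have hsr : s ^ (-(1 : ℝ) / 2) = r⁻¹ := by
    rw [hrs, ← Real.rpow_natCast, ← Real.rpow_mul hr0]
    norm_num [Real.rpow_neg_one]
  have hLl : (L : ℝ) ^ ((3 : ℝ) / 2) = L * l := by
    rw [hll, ← Real.rpow_natCast, ← Real.rpow_mul hl0]
    norm_num
    ring
  rw [hsr, hLl, ge_iff_le]
  have hl1 : 1 ≤ l := by nlinarith
  by_cases hδ : 2 * (L * l * ε) ≤ 1
  · rw [inv_mul_eq_div, le_div_iff₀ hrpos]
    refine le_trans ?_ hin
    have h6 : (L : ℝ) * ε ≤ L * l * ε := by nlinarith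
    have h7 : 1 - 3 * (L * l) * ε ≤ r * (1 - 2 * (L * l * ε)) := by
      have := mul_le_mul_of_nonneg_right hr1 (by linarith : 0 ≤ 1 - 2 * (L * l * ε))
      nlinarith [mul_nonneg hx0 (hx0.trans h6)]
    nlinarith [mul_le_mul_of_nonneg_right h7 hr0]
  · exact le_trans (by nlinarith) (by positivity : 0 ≤ r⁻¹ * ‖⟪∑ i, a i • χ i, U (∑ i, a i • φ i)⟫_ℂ‖)
end

section
/- Let H be a complex inner product space, L : ℕ with L ≥ 1, and ε : ℝ with 0 ≤ ε and ε * L < 1. Let φ : Fin L → H be unit vectors with ‖⟪φ i, φ j⟫_ℂ‖ ≤ ε for all i ≠ j, and let a : Fin L → ℂ be such that ‖∑ i, a i • φ i‖ = 1. Then ∑ i, ‖a i‖^2 ≤ 1 / (1 − ε * L). (This is the normalization bound in the paper's analysis of recovering from sparse superpositions of Pauli errors: if the corrupted code-states are ε-pairwise-orthogonal and their superposition is normalized, the coefficient mass is at most 1/(1 − εL).) -/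
open scoped InnerProductSpace

/-- Normalization bound for sparse superpositions of approximately pairwise-orthogonal unit
vectors: if `‖∑ aᵢ φᵢ‖ = 1` and `‖⟪φ i, φ j⟫‖ ≤ ε` for `i ≠ j`, then the coefficient mass
satisfies `∑ ‖aᵢ‖² ≤ 1 / (1 − εL)`. -/
theorem coefficient_mass_bound
    {H : Type*} [NormedAddCommGroup H] [InnerProductSpace ℂ H]
    (L : ℕ) (hL : 1 ≤ L) (ε : ℝ) (hε : 0 ≤ ε) (hεL : ε * L < 1)
    (φ : Fin L → H) (hφ : ∀ i, ‖φ i‖ = 1)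
    (hortho : ∀ i j, i ≠ j → ‖⟪φ i, φ j⟫_ℂ‖ ≤ ε)
    (a : Fin L → ℂ) (ha : ‖∑ i, a i • φ i‖ = 1) :
    (∑ i, ‖a i‖ ^ 2 : ℝ) ≤ 1 / (1 - ε * L) := by
  have hpos : 0 < 1 - ε * L := by linarith
  rw [le_div_iff₀ hpos]
  have h1 : (∑ i, ∑ j, RCLike.re (⟪a i • φ i, a j • φ j⟫_ℂ) : ℝ) = 1 := by
    have h := inner_self_eq_norm_sq (𝕜 := ℂ) (∑ i, a i • φ i)
    rw [ha, sum_inner] at h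
    simp only [inner_sum, map_sum] at h
    rw [one_pow] at h
    exact h
  have h2 : ∀ i j, (if i = j then ‖a i‖ ^ 2 else 0) - ε * (‖a i‖ * ‖a j‖)
      ≤ RCLike.re (⟪a i • φ i, a j • φ j⟫_ℂ) := by
    intro i j
    by_cases hij : i = j
    · subst hij
      rw [inner_self_eq_norm_sq, norm_smul, hφ, if_pos rfl]
      have : 0 ≤ ε * (‖a i‖ * ‖a i‖) := by positivity
      linarith [mul_one ‖a i‖, congrArg (fun x => x ^ 2) (mul_one ‖a i‖)]
    · rw [if_neg hij]
      have h3 : ‖⟪a i • φ i, a j • φ j⟫_ℂ‖ ≤ ε * (‖a i‖ * ‖a j‖) := by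
        rw [inner_smul_left, inner_smul_right, norm_mul, norm_mul, RCLike.norm_conj]
        have := mul_le_mul_of_nonneg_left (hortho i j hij)
          (mul_nonneg (norm_nonneg (a i)) (norm_nonneg (a j)))
        linarith
      have h4 := (abs_le.mp (RCLike.abs_re_le_norm (⟪a i • φ i, a j • φ j⟫_ℂ))).1
      linarith
  have h5 := Finset.sum_le_sum fun i (_ : i ∈ Finset.univ) =>
    Finset.sum_le_sum fun j (_ : j ∈ Finset.univ) => h2 i j
  rw [h1] at h5
  have h6 : (∑ i, ∑ j, ((if i = j then ‖a i‖ ^ 2 else 0) - ε * (‖a i‖ * ‖a j‖)) : ℝ)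
      = ∑ i, ‖a i‖ ^ 2 - ε * (∑ i, ‖a i‖) ^ 2 := by
    simp only [Finset.sum_sub_distrib, Finset.sum_ite_eq, Finset.mem_univ, if_true]
    rw [sq (∑ i, ‖a i‖), Finset.sum_mul_sum, Finset.mul_sum]
    simp only [Finset.mul_sum]
  rw [h6] at h5
  have h7 : (∑ i, ‖a i‖) ^ 2 ≤ L * ∑ i, ‖a i‖ ^ 2 := by
    simpa using sq_sum_le_card_mul_sum_sq (s := Finset.univ) (f := fun i => ‖a i‖)
  have h8 := mul_le_mul_of_nonneg_left h7 hε
  linarith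
end

section
/- Let F be a finite field, n m₁ m₂ : ℕ, and H₁ : Matrix (Fin m₁) (Fin n) F, H₂ : Matrix (Fin m₂) (Fin n) F parity check matrices of linear codes C₁ = ker H₁ and C₂ = ker H₂. Fix δ : ℝ and L : ℕ, and suppose both C₁ and C₂ are (δ, L) list-decodable from erasures (for every T : Finset (Fin n) with (1 − δ) * n ≤ T.card and every y : Fin n → F, at most L codewords of Cᵢ agree with y on T, for i = 1, 2). Then for every T : Finset (Fin n) with (1 − δ) * n ≤ T.card and every pair of syndromes s₁ : Fin m₁ → F, s₂ : Fin m₂ → F, the set of pairs {(a, b) : (Fin n → F) × (Fin n → F) | (∀ i ∈ T, a i = 0) ∧ (∀ i ∈ T, b i = 0) ∧ H₁.mulVec a = s₁ ∧ H₂.mulVec b = s₂} has at most L^2 elements. (This is the classical content of the paper's claim that the CSS code built from two (δ, L) erasure list-decodable linear codes is (δ, L²) erasure list-decodable: at most L² pairs of X- and Z-errors supported off T match any pair of syndromes.) -/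
theorem css_aux {F : Type*} [Field F] [Fintype F] (n m : ℕ)
    (H : Matrix (Fin m) (Fin n) F) (L : ℕ) (T : Finset (Fin n))
    (h : ∀ y : Fin n → F, {c : Fin n → F | H.mulVec c = 0 ∧ ∀ i ∈ T, c i = y i}.ncard ≤ L)
    (s : Fin m → F) :
    {a : Fin n → F | (∀ i ∈ T, a i = 0) ∧ H.mulVec a = s}.ncard ≤ L := by
  rcases Set.eq_empty_or_nonempty {a : Fin n → F | (∀ i ∈ T, a i = 0) ∧ H.mulVec a = s} with
    he | ⟨a₀, h₀, h₁⟩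
  · rw [he]; simp
  · refine le_trans (Set.ncard_le_ncard_of_injOn (fun a => a - a₀) ?_ ?_ (Set.toFinite _)) (h 0)
    · rintro a ⟨ha, hb⟩
      refine ⟨?_, ?_⟩
      · simp only [Matrix.mulVec_sub, hb, h₁, sub_self]
      · intro i hi
        simp [ha i hi, h₀ i hi]
    · intro a _ b _ hab
      exact sub_left_injective hab

/-- CSS erasure list-decoding: if the linear codes `C₁ = ker H₁` and `C₂ = ker H₂` are both
`(δ, L)` list-decodable from erasures, then for every subset `T` of at least `(1 − δ)·n`
coordinates and every pair of syndromes, at most `L²` pairs of error vectors supported off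
`T` match the pair of syndromes. -/
theorem css_erasure_list_decoding
    {F : Type*} [Field F] [Fintype F] (n m₁ m₂ : ℕ)
    (H₁ : Matrix (Fin m₁) (Fin n) F) (H₂ : Matrix (Fin m₂) (Fin n) F) (δ : ℝ) (L : ℕ)
    (hLDE₁ : ∀ T : Finset (Fin n), (1 - δ) * n ≤ T.card → ∀ y : Fin n → F,
      {c : Fin n → F | H₁.mulVec c = 0 ∧ ∀ i ∈ T, c i = y i}.ncard ≤ L)
    (hLDE₂ : ∀ T : Finset (Fin n), (1 - δ) * n ≤ T.card → ∀ y : Fin n → F,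
      {c : Fin n → F | H₂.mulVec c = 0 ∧ ∀ i ∈ T, c i = y i}.ncard ≤ L) :
    ∀ T : Finset (Fin n), (1 - δ) * n ≤ T.card → ∀ s₁ : Fin m₁ → F, ∀ s₂ : Fin m₂ → F,
      {ab : (Fin n → F) × (Fin n → F) |
        (∀ i ∈ T, ab.1 i = 0) ∧ (∀ i ∈ T, ab.2 i = 0) ∧
        H₁.mulVec ab.1 = s₁ ∧ H₂.mulVec ab.2 = s₂}.ncard ≤ L ^ 2 := by
  intro T hT s₁ s₂
  have e₁ := css_aux n m₁ H₁ L T (hLDE₁ T hT) s₁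
  have e₂ := css_aux n m₂ H₂ L T (hLDE₂ T hT) s₂
  have key := Nat.mul_le_mul e₁ e₂
  rw [← Set.ncard_prod, ← pow_two] at key
  refine le_trans (Set.ncard_le_ncard ?_ (Set.toFinite _)) key
  rintro ⟨a, b⟩ ⟨h1, h2, h3, h4⟩
  exact ⟨⟨h1, h3⟩, ⟨h2, h4⟩⟩
end

section
/- Let K be a finite field, let β ∈ K with β ≠ 0, and let r : ℕ with r ≥ 1. Then the set {α ∈ K | (α + β)^r = α^r ∨ (α * (α + β))^(r + 1) = 1} has cardinality at most 3 * r + 2. Consequently, for α chosen uniformly at random in K, the probability that ((α + β)^r − α^r) * ((α * (α + β))^(r + 1) − 1) = 0 is at most (3 * r + 2) / (Fintype.card K). (This is the root-counting core of the paper's proof that the Barnum et al. purity testing codes are pairwise-detectable: the stabilizer groups S_α and S_{α+β} can share an undetectable element only when α is a root of this low-degree polynomial.) -/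
open Polynomial in
theorem root_count_aux {K : Type*} [Field K] (β : K) (hβ : β ≠ 0) (r : ℕ) (hr : r ≠ 0) :
    {α : K | ((α + β) ^ r - α ^ r) * ((α * (α + β)) ^ (r + 1) - 1) = 0}.ncard ≤ 3 * r + 2 := by
  classical
  let p : K[X] := ((X + C β) ^ r - X ^ r) * ((X * (X + C β)) ^ (r + 1) - 1)
  have hev : ∀ α, p.eval α = ((α + β) ^ r - α ^ r) * ((α * (α + β)) ^ (r + 1) - 1) := by
    intro α; simp [p]
  have hdeg : p.natDegree ≤ 3 * r + 2 := by
    have h1 : ((X + C β) ^ r - X ^ r : K[X]).natDegree ≤ r := by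
      refine (natDegree_sub_le _ _).trans (max_le ?_ ?_)
      · refine natDegree_pow_le.trans ?_
        simp
      · simp
    have h2 : ((X * (X + C β)) ^ (r + 1) - 1 : K[X]).natDegree ≤ (r + 1) * 2 := by
      refine (natDegree_sub_le _ _).trans (max_le ?_ ?_)
      · refine natDegree_pow_le.trans (Nat.mul_le_mul_left _ ?_)
        refine natDegree_mul_le.trans ?_
        simp
      · simp
    have h3 := (natDegree_mul_le (p := ((X + C β) ^ r - X ^ r : K[X]))
      (q := (X * (X + C β)) ^ (r + 1) - 1))
    change p.natDegree ≤ _ at h3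
    omega
  have hp : p ≠ 0 := by
    intro h
    have h0 := hev 0
    rw [h] at h0
    simp [hr, hβ] at h0
  have hset : {α : K | ((α + β) ^ r - α ^ r) * ((α * (α + β)) ^ (r + 1) - 1) = 0}
      = (p.roots.toFinset : Set K) := by
    ext α
    simp only [Set.mem_setOf_eq, Finset.mem_coe, Multiset.mem_toFinset, mem_roots hp, IsRoot.def,
      hev]
  rw [hset, Set.ncard_coe_finset]
  exact (Multiset.toFinset_card_le _).trans ((card_roots' p).trans hdeg)

/-- Root-counting core of the pairwise-detectability of the Barnum et al. purity testing
codes: for a nonzero shift `β`, at most `3r + 2` elements `α` of a finite field satisfy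
`(α + β)^r = α^r` or `(α(α + β))^(r+1) = 1`; hence the probability that a uniformly random
`α` is a root of `((α + β)^r − α^r)·((α(α + β))^(r+1) − 1)` is at most `(3r + 2)/|K|`. -/
theorem pairwise_detectability_root_count
    {K : Type*} [Field K] [Fintype K] (β : K) (hβ : β ≠ 0) (r : ℕ) (hr : 1 ≤ r) :
    {α : K | (α + β) ^ r = α ^ r ∨ (α * (α + β)) ^ (r + 1) = 1}.ncard ≤ 3 * r + 2 ∧
    ({α : K | ((α + β) ^ r - α ^ r) * ((α * (α + β)) ^ (r + 1) - 1) = 0}.ncard : ℝ)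
        / (Fintype.card K : ℝ) ≤ ((3 * r + 2 : ℕ) : ℝ) / (Fintype.card K : ℝ) := by
  have h := root_count_aux β hβ r (by omega)
  have he : {α : K | (α + β) ^ r = α ^ r ∨ (α * (α + β)) ^ (r + 1) = 1}
      = {α : K | ((α + β) ^ r - α ^ r) * ((α * (α + β)) ^ (r + 1) - 1) = 0} := by
    ext α
    simp only [Set.mem_setOf_eq, mul_eq_zero, sub_eq_zero]
  refine ⟨he ▸ h, ?_⟩
  exact div_le_div_of_nonneg_right (by exact_mod_cast h) (Nat.cast_nonneg _)
end
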